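/- arXiv:2207.01597 — 6 statements merged into one kernel-verified Lean document; each statement's English description precedes it below -/
import Mathlib

section
/- If 0 ≤ a < b ≤ 1, then (1/(4π))∫_a^b f(t) dt = μ_ST([√(1+a)/2, √(1+b)/2]) + μ_ST([√(1−b)/2, √(1−a)/2]). -/
noncomputable section

/-- The `O(3)` (Batman) density function. -/
def fBat (t : ℝ) : ℝ :=
  if 1 < |t| ∧ |t| < 3 then Real.sqrt ((3 - |t|) / (1 + |t|))
  else if |t| < 1 then Real.sqrt ((3 - t) / (1 + t)) + Real.sqrt ((3 + t) / (1 - t))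
  else 0

/-- The semicircular (Sato–Tate) measure of `[a,b]`. -/
def muST (a b : ℝ) : ℝ := (2 / Real.pi) * ∫ x in a..b, Real.sqrt (1 - x ^ 2)

lemma hG_deriv (x : ℝ) : HasDerivAt (fun y : ℝ => ∫ x in (0:ℝ)..y, Real.sqrt (1 - x ^ 2))
    (Real.sqrt (1 - x ^ 2)) x := by
  have hc : Continuous (fun x : ℝ => Real.sqrt (1 - x ^ 2)) := by fun_prop
  exact intervalIntegral.integral_hasDerivAt_right (hc.intervalIntegrable _ _)
    (hc.stronglyMeasurableAtFilter _ _) hc.continuousAt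

lemma half_alg (s : ℝ) (h0 : 0 < s) :
    Real.sqrt (1 - (Real.sqrt s / 2) ^ 2) * (1 / (2 * Real.sqrt s) / 2)
      = Real.sqrt ((4 - s) / s) / 8 := by
  have hs : 0 < Real.sqrt s := Real.sqrt_pos.2 h0
  have e : 1 - (Real.sqrt s / 2) ^ 2 = (4 - s) / 2 ^ 2 := by
    rw [div_pow, Real.sq_sqrt h0.le]; ring
  rw [e, Real.sqrt_div' _ (by positivity), Real.sqrt_div' _ h0.le, Real.sqrt_sq (by norm_num)]
  field_simp
  norm_num

lemma muST_eq (a b : ℝ) : muST a b = (2 / Real.pi) *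
    ((∫ x in (0:ℝ)..b, Real.sqrt (1 - x ^ 2)) - ∫ x in (0:ℝ)..a, Real.sqrt (1 - x ^ 2)) := by
  have hc : Continuous (fun x : ℝ => Real.sqrt (1 - x ^ 2)) := by fun_prop
  rw [muST, intervalIntegral.integral_interval_sub_left (hc.intervalIntegrable _ _)
    (hc.intervalIntegrable _ _)]

theorem batman_as_semicircle_low (a b : ℝ) (ha : 0 ≤ a) (hab : a < b) (hb : b ≤ 1) :
    (1 / (4 * Real.pi)) * ∫ t in a..b, fBat t
      = muST (Real.sqrt (1 + a) / 2) (Real.sqrt (1 + b) / 2)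
        + muST (Real.sqrt (1 - b) / 2) (Real.sqrt (1 - a) / 2) := by
  have hGc : Continuous (fun y : ℝ => ∫ x in (0:ℝ)..y, Real.sqrt (1 - x ^ 2)) :=
    continuous_iff_continuousAt.2 fun x => (hG_deriv x).continuousAt
  rw [muST_eq, muST_eq]
  have hd := hG_deriv
  set G : ℝ → ℝ := fun y : ℝ => ∫ x in (0:ℝ)..y, Real.sqrt (1 - x ^ 2) with hG
  change _ = 2 / Real.pi * (G _ - G _) + 2 / Real.pi * (G _ - G _)
  have hFc : ContinuousOn (fun t => 8 * (G (Real.sqrt (1 + t) / 2) - G (Real.sqrt (1 - t) / 2)))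
      (Set.Icc a b) := by
    apply Continuous.continuousOn
    have h1 : Continuous (fun t : ℝ => G (Real.sqrt (1 + t) / 2)) :=
      hGc.comp (by fun_prop)
    have h2 : Continuous (fun t : ℝ => G (Real.sqrt (1 - t) / 2)) :=
      hGc.comp (by fun_prop)
    exact continuous_const.mul (h1.sub h2)
  have hFd : ∀ t ∈ Set.Ioo a b, HasDerivAt
      (fun t => 8 * (G (Real.sqrt (1 + t) / 2) - G (Real.sqrt (1 - t) / 2))) (fBat t) t := by
    intro t ht
    have p1 : 0 < 1 + t := by linarith [ht.1]
    have p2 : 0 < 1 - t := by linarith [ht.2]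
    have d1 := (hd _).comp t
      ((((hasDerivAt_id t).const_add 1).sqrt (by simpa using p1.ne')).div_const 2)
    have d2 := (hd _).comp t
      ((((hasDerivAt_id t).const_sub 1).sqrt (by simpa using p2.ne')).div_const 2)
    have d := (d1.sub d2).const_mul 8
    refine HasDerivAt.congr_deriv d ?_
    have q1 := half_alg _ p1
    have q2 := half_alg _ p2
    have habs : |t| < 1 := by rw [abs_lt]; constructor <;> linarith
    rw [fBat, if_neg (fun h => absurd h.1 (by linarith)), if_pos habs]
    have e1 : 4 - (1 + t) = 3 - t := by ring
    have e2 : 4 - (1 - t) = 3 + t := by ring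
    rw [e1] at q1
    rw [e2] at q2
    simp only [id, neg_div, mul_neg, q1, q2]
    ring
  have hnn : ∀ t ∈ Set.Ioo a b, 0 ≤ fBat t := by
    intro t _
    unfold fBat
    split_ifs <;> positivity
  have hint : IntervalIntegrable fBat MeasureTheory.volume a b :=
    (intervalIntegrable_iff_integrableOn_Ioc_of_le hab.le).2
      (intervalIntegral.integrableOn_deriv_of_nonneg hFc hFd hnn)
  rw [intervalIntegral.integral_eq_sub_of_hasDerivAt_of_le hab.le hFc hFd hint]
  field_simp
  ring

end
end

section
/- If 1 ≤ a < b ≤ 3, then (1/(4π))∫_a^b f(t) dt = μ_ST([√(1+a)/2, √(1+b)/2]). -/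
noncomputable section

theorem batman_as_semicircle_high (a b : ℝ) (ha : 1 ≤ a) (hab : a < b) (hb : b ≤ 3) :
    (1 / (4 * Real.pi)) * ∫ t in a..b, fBat t
      = muST (Real.sqrt (1 + a) / 2) (Real.sqrt (1 + b) / 2) := by
  have h1 : ∫ t in a..b, fBat t
      = ∫ t in a..b, 8 * (((fun x : ℝ => Real.sqrt (1 - x ^ 2)) ∘ (fun t : ℝ => Real.sqrt (1 + t) / 2)) t
          * (1 / (2 * Real.sqrt (1 + t)) / 2)) := by
    apply intervalIntegral.integral_congr_ae
    refine Filter.Eventually.of_forall ?_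
    intro t ht
    rw [Set.uIoc_of_le hab.le] at ht
    have ht1 : 1 < t := lt_of_le_of_lt ha ht.1
    have ht3 : t ≤ 3 := ht.2.trans hb
    have hs : 0 < Real.sqrt (1 + t) := Real.sqrt_pos.mpr (by linarith)
    have e1 : fBat t = Real.sqrt (3 - t) / Real.sqrt (1 + t) := by
      unfold fBat
      rw [abs_of_pos (by linarith : (0:ℝ) < t)]
      rcases lt_or_eq_of_le ht3 with h | h
      · rw [if_pos ⟨ht1, h⟩, Real.sqrt_div (by linarith)]
      · subst h
        norm_num
    have e2 : Real.sqrt (1 - (Real.sqrt (1 + t) / 2) ^ 2) = Real.sqrt (3 - t) / 2 := by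
      rw [div_pow, Real.sq_sqrt (by linarith)]
      rw [show 1 - (1 + t) / 2 ^ 2 = (3 - t) / 2 ^ 2 by ring, Real.sqrt_div (by linarith),
        Real.sqrt_sq (by norm_num)]
    simp only [Function.comp]
    rw [e1, e2]
    field_simp
    norm_num
  have h2 := intervalIntegral.integral_comp_mul_deriv (a := a) (b := b)
    (f := fun t : ℝ => Real.sqrt (1 + t) / 2)
    (f' := fun t : ℝ => 1 / (2 * Real.sqrt (1 + t)) / 2)
    (g := fun x : ℝ => Real.sqrt (1 - x ^ 2))
    (by
      intro t ht
      rw [Set.uIcc_of_le hab.le] at ht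
      have : (1 + t) ≠ 0 := by linarith [ht.1]
      exact (((hasDerivAt_id t).const_add 1).sqrt this).div_const 2)
    (by
      apply ContinuousOn.div_const
      apply ContinuousOn.div continuousOn_const (by fun_prop)
      intro t ht
      rw [Set.uIcc_of_le hab.le] at ht
      have : 0 < Real.sqrt (1 + t) := Real.sqrt_pos.mpr (by linarith [ht.1])
      positivity)
    (by fun_prop)
  rw [h1, intervalIntegral.integral_const_mul, h2]
  unfold muST
  have := Real.pi_pos
  field_simp
  norm_num

end
end

section
/- For all integers m ≥ 1 and 0 ≤ l ≤ m, one has Σ_{r=0}^{l} (−1)^l · C(m + 1/2, r) · C(m − 1/2, m − r) · C(m − r, l − r) = (−1)^m · C(m − 1/2, m) · b(2l; 2m). -/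
noncomputable section

/-- Generalized binomial coefficient `C(x,n) = x(x-1)⋯(x-n+1)/n!`. -/
def gchoose (x : ℝ) (n : ℕ) : ℝ :=
  (∏ i ∈ Finset.range n, (x - i)) / (Nat.factorial n)

/-- Chebyshev polynomials of the second kind (as real polynomials). -/
def UPoly : ℕ → Polynomial ℝ
  | 0 => 1
  | 1 => Polynomial.C 2 * Polynomial.X
  | (n + 2) => Polynomial.C 2 * Polynomial.X * UPoly (n + 1) - UPoly n

theorem gchoose_eq_ring (x : ℝ) (n : ℕ) : gchoose x n = Ring.choose x n := by
  have h : (descPochhammer ℤ n).smeval x = ∏ i ∈ Finset.range n, (x - i) := by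
    induction n with
    | zero => simp
    | succ n ih =>
      rw [Finset.prod_range_succ, ← ih]
      simp [descPochhammer_succ_right, Polynomial.smeval_mul, Polynomial.smeval_natCast]
  rw [Ring.choose_eq_smul, gchoose, h]
  simp [div_eq_inv_mul]

def halfP (n : ℕ) : ℝ := ∏ i ∈ Finset.range n, ((i : ℝ) + 1 / 2)

theorem halfP_pos (n : ℕ) : 0 < halfP n := Finset.prod_pos fun i _ => by positivity

theorem gchoose_half (j k : ℕ) (x : ℝ) (hx : x = (j : ℝ) + k - 1 / 2) :
    gchoose x k = halfP (j + k) / (halfP j * k.factorial) := by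
  have h : ∏ i ∈ Finset.range k, (x - i) = ∏ i ∈ Finset.range k, (((j + i : ℕ) : ℝ) + 1 / 2) := by
    rw [← Finset.prod_range_reflect]
    apply Finset.prod_congr rfl
    intro i hi
    have : i < k := Finset.mem_range.mp hi
    have h2 : k - 1 - i = k - (1 + i) := by omega
    rw [h2, Nat.cast_sub (by omega), hx]
    push_cast
    ring
  have h3 : halfP (j + k) = halfP j * ∏ i ∈ Finset.range k, (((j + i : ℕ) : ℝ) + 1 / 2) := by
    unfold halfP
    rw [Finset.prod_range_add]
  rw [gchoose, h, h3, mul_div_mul_left _ _ (halfP_pos j).ne']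

theorem halfP_fact (l : ℕ) : ((2 * l).factorial : ℝ) = 4 ^ l * l.factorial * halfP l := by
  induction l with
  | zero => simp [halfP]
  | succ l ih =>
    have : halfP (l + 1) = halfP l * (l + 1 / 2) := Finset.prod_range_succ _ _
    rw [this, show 2 * (l + 1) = (2 * l + 1) + 1 by ring, Nat.factorial_succ, Nat.factorial_succ,
      Nat.factorial_succ]
    push_cast
    rw [ih]
    ring

theorem UPoly_zero_coeff (n : ℕ) : ∀ j, n < j → (UPoly n).coeff j = 0 := by
  induction n using Nat.strong_induction_on with
  | _ n ih =>
    intro j hj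
    match n, ih, hj with
    | 0, _, hj => simp [UPoly, Polynomial.coeff_one]; omega
    | 1, _, hj => simp [UPoly, Polynomial.coeff_X]; omega
    | n + 2, ih, hj =>
      obtain ⟨j, rfl⟩ : ∃ i, j = i + 1 := ⟨j - 1, by omega⟩
      rw [UPoly, Polynomial.coeff_sub, mul_assoc, Polynomial.coeff_C_mul, Polynomial.coeff_X_mul,
        ih (n + 1) (by omega) j (by omega), ih n (by omega) _ (by omega)]
      simp

theorem UPoly_coeff (n : ℕ) : ∀ j k, n = j + 2 * k →
    (UPoly n).coeff j = (-1) ^ k * ((j + k).choose k : ℝ) * 2 ^ j := by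
  induction n using Nat.strong_induction_on with
  | _ n ih =>
    intro j k hj
    match n, ih, hj with
    | 0, _, hj =>
      obtain rfl : j = 0 := by omega
      obtain rfl : k = 0 := by omega
      simp [UPoly]
    | 1, _, hj =>
      obtain rfl : j = 1 := by omega
      obtain rfl : k = 0 := by omega
      simp [UPoly]
    | n + 2, ih, hj =>
      rw [UPoly, Polynomial.coeff_sub, mul_assoc, Polynomial.coeff_C_mul]
      cases j with
      | zero =>
        obtain ⟨k, rfl⟩ : ∃ i, k = i + 1 := ⟨k - 1, by omega⟩
        rw [Polynomial.coeff_X_mul_zero, ih n (by omega) 0 k (by omega)]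
        simp [pow_succ]
      | succ j =>
        rw [Polynomial.coeff_X_mul, ih (n + 1) (by omega) j k (by omega)]
        cases k with
        | zero =>
          rw [UPoly_zero_coeff n (j + 1) (by omega)]
          simp [pow_succ]; ring
        | succ k =>
          rw [ih n (by omega) (j + 1) k (by omega), show j + 1 + (k + 1) = (j + 1 + k) + 1 by ring,
            Nat.choose_succ_succ, show j + (k + 1) = j + 1 + k by ring]
          push_cast
          ring

theorem gchoose_nat (n k : ℕ) : gchoose (n : ℝ) k = (n.choose k : ℝ) := by
  rw [gchoose_eq_ring, Ring.choose_natCast]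

theorem bracket_chebyshev_identity (m : ℕ) (hm : 1 ≤ m) (l : ℕ) (hl : l ≤ m) :
    ∑ r ∈ Finset.range (l + 1),
      (-1 : ℝ) ^ l * gchoose ((m : ℝ) + 1 / 2) r * gchoose ((m : ℝ) - 1 / 2) (m - r) *
        gchoose ((m : ℝ) - (r : ℝ)) (l - r)
      = (-1 : ℝ) ^ m * gchoose ((m : ℝ) - 1 / 2) m * (UPoly (2 * m)).coeff (2 * l) := by
  have hP := fun n => (halfP_pos n).ne'
  have hF : ∀ n : ℕ, (n.factorial : ℝ) ≠ 0 := fun n => by positivity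
  have V : ∑ r ∈ Finset.range (l + 1), gchoose ((m : ℝ) + 1 / 2) r * gchoose ((l : ℝ) - 1 / 2) (l - r)
      = ((m + l).choose l : ℝ) := by
    rw [← gchoose_nat, gchoose_eq_ring,
      show ((m + l : ℕ) : ℝ) = ((m : ℝ) + 1 / 2) + ((l : ℝ) - 1 / 2) by push_cast; ring,
      Ring.add_choose_eq l (Commute.all _ _), Finset.Nat.sum_antidiagonal_eq_sum_range_succ_mk]
    simp only [gchoose_eq_ring]
  have T : ∀ r ∈ Finset.range (l + 1),
      (-1 : ℝ) ^ l * gchoose ((m : ℝ) + 1 / 2) r * gchoose ((m : ℝ) - 1 / 2) (m - r) *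
        gchoose ((m : ℝ) - (r : ℝ)) (l - r) = (-1 : ℝ) ^ l * gchoose ((m : ℝ) - 1 / 2) (m - l) *
        (gchoose ((m : ℝ) + 1 / 2) r * gchoose ((l : ℝ) - 1 / 2) (l - r)) := by
    intro r hr
    have hr : r ≤ l := by simpa [Nat.lt_succ_iff] using hr
    obtain ⟨a, rfl⟩ := Nat.exists_eq_add_of_le hr
    obtain ⟨b, rfl⟩ := Nat.exists_eq_add_of_le hl
    rw [show r + a + b - r = a + b by omega, show r + a - r = a by omega,
      show r + a + b - (r + a) = b by omega,
      gchoose_half r (a + b) (((r + a + b : ℕ) : ℝ) - 1 / 2) (by push_cast; ring),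
      gchoose_half (r + a) b (((r + a + b : ℕ) : ℝ) - 1 / 2) (by push_cast; ring),
      gchoose_half r a (((r + a : ℕ) : ℝ) - 1 / 2) (by push_cast; ring),
      show ((r + a + b : ℕ) : ℝ) - r = ((a + b : ℕ) : ℝ) by push_cast; ring,
      gchoose_nat, Nat.cast_add_choose, ← add_assoc]
    have := hP r
    have := hP (r + a)
    have := hF a
    have := hF b
    have := hF (a + b)
    field_simp
  rw [Finset.sum_congr rfl T, ← Finset.mul_sum, V]
  obtain ⟨b, rfl⟩ := Nat.exists_eq_add_of_le hl
  rw [UPoly_coeff (2 * (l + b)) (2 * l) b (by ring), show l + b - l = b by omega,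
    gchoose_half l b _ (by push_cast; ring), gchoose_half 0 (l + b) _ (by push_cast; ring),
    show l + b + l = l + (l + b) by ring, show 2 * l + b = b + 2 * l by ring,
    Nat.cast_add_choose, Nat.cast_add_choose, halfP_fact, pow_mul, pow_add]
  have h0 : halfP 0 = 1 := by simp [halfP]
  have hs : (-1 : ℝ) ^ b * (-1) ^ b = 1 := by rw [← mul_pow]; simp
  rw [h0, zero_add, show l + (l + b) = b + 2 * l by ring]
  have := hP l
  have := hF l
  have := hF b
  have := hF (l + b)
  norm_num
  field_simp
  linear_combination (-halfP (l + b)) * hs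

end
end

section
/- For every τ in the complex upper half-plane ℍ, one has (4τ+1)^{−1/2} · Σ_{n ∈ ℤ} exp(2πi · n² · 4τ/(4τ+1)) = ((1−i)/2) · ( Σ_{n ∈ ℤ, n even} e^{2πi n² τ} + i · Σ_{n ∈ ℤ, n odd} e^{2πi n² τ} ), where the square root is the principal branch. -/
open scoped Classical

noncomputable section

lemma aux_cpow (u : ℂ) (hu : 0 < u.im) :
    u ^ (-(1 / 2 : ℂ)) * (-Complex.I * (u / 2)) ^ (1 / 2 : ℂ) = (1 - Complex.I) / 2 := by
  have hu0 : u ≠ 0 := by rintro rfl; simp at hu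
  have h1 : (-Complex.I * (u / 2)) = u * (-Complex.I / 2) := by ring
  have hz : (-Complex.I / 2) = ((1 - Complex.I) / 2) ^ 2 := by
    have := Complex.I_sq
    linear_combination (-1 / 4 : ℂ) * this
  have hz0 : (-Complex.I / 2 : ℂ) ≠ 0 := by simp
  have harg : (-Complex.I / 2 : ℂ).arg = -(Real.pi / 2) := by
    rw [show (-Complex.I / 2 : ℂ) = ((1 / 2 : ℝ) : ℂ) * (-Complex.I) by push_cast; ring,
      Complex.arg_real_mul _ (by norm_num), Complex.arg_neg_I]
    
  have hmem : u.arg + (-Complex.I / 2 : ℂ).arg ∈ Set.Ioc (-Real.pi) Real.pi := by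
    rw [harg]
    have h0 : 0 ≤ u.arg := Complex.arg_nonneg_iff.mpr hu.le
    have := Complex.arg_le_pi u
    have := Real.pi_pos
    constructor <;> linarith
  have hm : (u * (-Complex.I / 2)) ^ (1 / 2 : ℂ)
      = u ^ (1 / 2 : ℂ) * (-Complex.I / 2) ^ (1 / 2 : ℂ) := by
    rw [Complex.cpow_def_of_ne_zero (mul_ne_zero hu0 hz0), Complex.cpow_def_of_ne_zero hu0,
      Complex.cpow_def_of_ne_zero hz0, Complex.log_mul hu0 hz0 hmem, add_mul, Complex.exp_add]
  rw [h1, hm, ← mul_assoc, ← Complex.cpow_add _ _ hu0, neg_add_cancel, Complex.cpow_zero, one_mul,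
    hz, one_div, Complex.sq_cpow_two_inv]
  simp

theorem theta4_transform_4_1 (τ : ℂ) (hτ : 0 < τ.im) :
    (4 * τ + 1) ^ (-(1 / 2 : ℂ)) *
        ∑' n : ℤ, Complex.exp (2 * (Real.pi : ℂ) * Complex.I * (n : ℂ) ^ 2 *
          (4 * τ / (4 * τ + 1)))
      = ((1 - Complex.I) / 2) *
          ((∑' n : ℤ, if Even n then
              Complex.exp (2 * (Real.pi : ℂ) * Complex.I * (n : ℂ) ^ 2 * τ) else 0)
            + Complex.I *
              ∑' n : ℤ, if Odd n then
                Complex.exp (2 * (Real.pi : ℂ) * Complex.I * (n : ℂ) ^ 2 * τ) else 0) := by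
  have hu : 0 < (4 * τ + 1).im := by simpa using hτ
  have hu0 : 4 * τ + 1 ≠ 0 := by intro h; rw [h] at hu; simp at hu
  set w : ℂ := (4 * τ + 1) / 2 with hw
  have hw0 : w ≠ 0 := div_ne_zero hu0 two_ne_zero
  have hwim : 0 < w.im := by
    have : w = 2 * τ + ((1 / 2 : ℝ) : ℂ) := by rw [hw]; push_cast; ring
    rw [this]; simpa using hτ
  have hL : ∑' n : ℤ, Complex.exp (2 * (Real.pi : ℂ) * Complex.I * (n : ℂ) ^ 2 *
      (4 * τ / (4 * τ + 1))) = jacobiTheta₂ 0 (-1 / w) := by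
    refine tsum_congr fun n => ?_
    rw [jacobiTheta₂_term, Complex.exp_eq_exp_iff_exists_int]
    refine ⟨n ^ 2, ?_⟩
    rw [hw]
    push_cast
    field_simp
    ring
  have hF := jacobiTheta₂_functional_equation 0 w
  have hI : (-Complex.I * w) ^ (1 / 2 : ℂ) ≠ 0 := by
    rw [Ne, Complex.cpow_eq_zero_iff]
    simp [hw0]
  have hF' : jacobiTheta₂ 0 (-1 / w) = (-Complex.I * w) ^ (1 / 2 : ℂ) * jacobiTheta₂ 0 w := by
    rw [hF]
    simp only [zero_div, ne_eq, OfNat.ofNat_ne_zero, not_false_eq_true, zero_pow, mul_zero,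
      Complex.exp_zero, mul_one]
    rw [← mul_assoc, mul_one_div, div_self hI, one_mul]
  rw [hL, hF', ← mul_assoc, hw, aux_cpow _ hu, ← hw]
  congr 1
  have hs : Summable fun n : ℤ =>
      Complex.exp (2 * (Real.pi : ℂ) * Complex.I * (n : ℂ) ^ 2 * τ) := by
    have := (summable_jacobiTheta₂_term_iff 0 (2 * τ)).mpr (by simpa using hτ)
    refine this.congr fun n => ?_
    rw [jacobiTheta₂_term]
    congr 1
    ring
  have hE := hs.indicator {n : ℤ | Even n}
  have hO := hs.indicator {n : ℤ | Odd n}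
  have e1 : (∑' n : ℤ, if Even n then
      Complex.exp (2 * (Real.pi : ℂ) * Complex.I * (n : ℂ) ^ 2 * τ) else 0) = _ :=
    tsum_congr fun n => (Set.indicator_apply {n : ℤ | Even n} (fun n : ℤ =>
      Complex.exp (2 * (Real.pi : ℂ) * Complex.I * (n : ℂ) ^ 2 * τ)) n).symm
  have e2 : (∑' n : ℤ, if Odd n then
      Complex.exp (2 * (Real.pi : ℂ) * Complex.I * (n : ℂ) ^ 2 * τ) else 0) = _ :=
    tsum_congr fun n => (Set.indicator_apply {n : ℤ | Odd n} (fun n : ℤ =>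
      Complex.exp (2 * (Real.pi : ℂ) * Complex.I * (n : ℂ) ^ 2 * τ)) n).symm
  rw [e1, e2, ← tsum_mul_left, ← hE.tsum_add (hO.mul_left _)]
  refine tsum_congr fun n => ?_
  rw [jacobiTheta₂_term]
  rcases Int.even_or_odd n with h | h
  · have h' : ¬ Odd n := Int.not_odd_iff_even.mpr h
    simp only [Set.indicator_apply, Set.mem_ofPred_eq, h, h', if_true, if_false, mul_zero, add_zero]
    rw [Complex.exp_eq_exp_iff_exists_int]
    obtain ⟨k, rfl⟩ := h
    refine ⟨k ^ 2, ?_⟩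
    rw [hw]
    push_cast
    ring
  · have h' : ¬ Even n := Int.not_even_iff_odd.mpr h
    simp only [Set.indicator_apply, Set.mem_ofPred_eq, h, h', if_true, if_false, zero_add]
    conv_rhs => arg 1; rw [← Complex.exp_pi_div_two_mul_I]
    rw [← Complex.exp_add, Complex.exp_eq_exp_iff_exists_int]
    obtain ⟨k, rfl⟩ := h
    refine ⟨k ^ 2 + k, ?_⟩
    rw [hw]
    push_cast
    ring

end
end

section
/- For every τ in the complex upper half-plane ℍ, one has (8τ+1)^{−1/2} · Σ_{n ∈ ℤ} exp(2πi · n² · 4τ/(8τ+1)) = Σ_{n ∈ ℤ, n odd} e^{2πi n² τ}, where the square root is the principal branch. -/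
open scoped Classical

noncomputable section

lemma aux_even (n : ℤ) (s : ℤ) (hs : s = 1 ∨ s = -1) : Complex.exp (Real.pi * Complex.I * ((n : ℂ) ^ 2 + s * n)) = 1 := by
  have h : Even (n ^ 2 + s * n) := by
    rcases hs with rfl | rfl <;> simp [parity_simps]
  obtain ⟨k, hk⟩ := h
  have hk' : ((n : ℂ) ^ 2 + s * n) = k + k := by exact_mod_cast hk
  rw [hk', Complex.exp_eq_one_iff]
  exact ⟨k, by ring⟩

lemma aux_sqrt (u : ℂ) (hu : 0 < u.im) :
    (-Complex.I * u) ^ (1 / 2 : ℂ) * Complex.exp (Real.pi * Complex.I / 4) = u ^ (1 / 2 : ℂ) := by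
  have hu0 : u ≠ 0 := by rintro rfl; simp at hu
  have hI : -Complex.I ≠ 0 := by simp
  have hlog : Complex.log (-Complex.I * u) = Complex.log (-Complex.I) + Complex.log u := by
    rw [Complex.log_mul_eq_add_log_iff hI hu0, Complex.arg_neg_I]
    have h1 := Complex.arg_nonneg_iff.mpr hu.le
    have h2 := Complex.arg_le_pi u
    have := Real.pi_pos
    constructor <;> linarith
  rw [Complex.cpow_def_of_ne_zero (mul_ne_zero hI hu0), Complex.cpow_def_of_ne_zero hu0, hlog,
    Complex.log_neg_I, ← Complex.exp_add]
  congr 1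
  ring

theorem theta4_transform_8_1 (τ : ℂ) (hτ : 0 < τ.im) :
    (8 * τ + 1) ^ (-(1 / 2 : ℂ)) *
        ∑' n : ℤ, Complex.exp (2 * (Real.pi : ℂ) * Complex.I * (n : ℂ) ^ 2 *
          (4 * τ / (8 * τ + 1)))
      = ∑' n : ℤ, if Odd n then
          Complex.exp (2 * (Real.pi : ℂ) * Complex.I * (n : ℂ) ^ 2 * τ) else 0 := by
  obtain ⟨u, hu⟩ : ∃ u, u = 8 * τ + 1 := ⟨_, rfl⟩
  have huim : 0 < u.im := by rw [hu]; simpa using hτ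
  have hu0 : u ≠ 0 := by rintro rfl; simp at huim
  have hL : ∑' n : ℤ, Complex.exp (2 * (Real.pi : ℂ) * Complex.I * (n : ℂ) ^ 2 *
          (4 * τ / (8 * τ + 1))) = jacobiTheta₂ (1 / 2) (-1 / u) := by
    unfold jacobiTheta₂
    refine tsum_congr fun n => ?_
    unfold jacobiTheta₂_term
    refine Eq.trans ?_ (mul_one _)
    have hE := aux_even n (-1) (Or.inr rfl)
    refine Eq.trans ?_ (congrArg _ hE)
    rw [← Complex.exp_add, ← hu]
    congr 1
    have : τ = (u - 1) / 8 := by rw [hu]; ring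
    rw [this]
    push_cast
    field_simp
    ring
  have hR : (∑' n : ℤ, if Odd n then
          Complex.exp (2 * (Real.pi : ℂ) * Complex.I * (n : ℂ) ^ 2 * τ) else 0)
        = Complex.exp (2 * Real.pi * Complex.I * τ) * jacobiTheta₂ (u / 2) u := by
    have hinj : Function.Injective (fun n : ℤ => 2 * n + 1) := by
      intro a b h; simp only at h; omega
    rw [← hinj.tsum_eq]
    · unfold jacobiTheta₂
      rw [← tsum_mul_left]
      refine tsum_congr fun n => ?_
      unfold jacobiTheta₂_term
      rw [if_pos ⟨n, rfl⟩, ← mul_one (Complex.exp (2 * Real.pi * Complex.I * ((2 * n + 1 : ℤ) : ℂ) ^ 2 * τ)),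
        ← aux_even n 1 (Or.inl rfl), ← Complex.exp_add, ← Complex.exp_add, hu]
      congr 1
      push_cast
      ring
    · intro n hn
      by_cases h : Odd n
      · obtain ⟨k, hk⟩ := h
        exact ⟨k, hk.symm⟩
      · simp [h] at hn
  have hs := aux_sqrt u huim
  have hu2 : u ^ (1 / 2 : ℂ) ≠ 0 := by simp [Complex.cpow_eq_zero_iff, hu0]
  have hw : (-Complex.I * u) ^ (1 / 2 : ℂ) ≠ 0 := by
    intro h; rw [h, zero_mul] at hs; exact hu2 hs.symm
  rw [hL, hR, ← hu, jacobiTheta₂_functional_equation (u / 2) u, Complex.cpow_neg]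
  have e1 : u / 2 / u = 1 / 2 := by field_simp
  have e2 : Complex.exp (2 * Real.pi * Complex.I * τ) *
      Complex.exp (-Real.pi * Complex.I * (u / 2) ^ 2 / u) *
      Complex.exp (Real.pi * Complex.I / 4) = 1 := by
    rw [← Complex.exp_add, ← Complex.exp_add, ← Complex.exp_zero]
    congr 1
    have : τ = (u - 1) / 8 := by rw [hu]; ring
    rw [this]
    field_simp
    ring
  rw [e1, ← hs]
  have h4 := Complex.exp_ne_zero (Real.pi * Complex.I / 4)
  generalize Complex.exp (Real.pi * Complex.I / 4) = c at *
  generalize (-Complex.I * u) ^ (1 / 2 : ℂ) = w at *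
  generalize jacobiTheta₂ (1 / 2) (-1 / u) = J at *
  generalize Complex.exp (-Real.pi * Complex.I * (u / 2) ^ 2 / u) = b at *
  generalize Complex.exp (2 * Real.pi * Complex.I * τ) = a at *
  field_simp
  linear_combination (-J) * e2

end
end

section
/- If T' > √3/(4π) and x = 4/(1 + 16π²T'²), then 0 < x < 1 and f(1−x) > 4πT'. -/
noncomputable section

theorem density_exceeds_threshold (T' : ℝ) (hT : Real.sqrt 3 / (4 * Real.pi) < T')
    (x : ℝ) (hx : x = 4 / (1 + 16 * Real.pi ^ 2 * T' ^ 2)) :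
    0 < x ∧ x < 1 ∧ 4 * Real.pi * T' < fBat (1 - x) := by
  have hpi := Real.pi_pos
  obtain ⟨s, hs⟩ : ∃ s, s = 4 * Real.pi * T' := ⟨_, rfl⟩
  have h1 : Real.sqrt 3 < s := by
    rw [div_lt_iff₀ (by positivity)] at hT
    rw [hs]; linarith
  have h0 : 0 < s := lt_of_le_of_lt (Real.sqrt_nonneg 3) h1
  have h3 : 3 < s ^ 2 := (Real.sqrt_lt' h0).1 h1
  have hx' : x = 4 / (1 + s ^ 2) := by rw [hx, hs]; ring
  have hx0 : 0 < x := by rw [hx']; positivity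
  have hx1 : x < 1 := by
    rw [hx', div_lt_one (by positivity)]; linarith
  refine ⟨hx0, hx1, ?_⟩
  have ha : |1 - x| < 1 := by rw [abs_lt]; constructor <;> linarith
  have he : (3 + (1 - x)) / (1 - (1 - x)) = s ^ 2 := by
    rw [hx']
    have : 1 + s ^ 2 ≠ 0 := by positivity
    field_simp
    ring
  have hp : 0 < Real.sqrt ((3 - (1 - x)) / (1 + (1 - x))) :=
    Real.sqrt_pos.2 (div_pos (by linarith) (by linarith))
  unfold fBat
  rw [if_neg (fun h => absurd h.1 (not_lt.2 ha.le)), if_pos ha, he, Real.sqrt_sq h0.le, ← hs]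
  linarith

end
end
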